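/- Let H be a finite-dimensional complex Hilbert space, Â and B̂ self-adjoint operators with nondegenerate spectra satisfying ⟨φ_a^Â, φ_b^B̂⟩ ≠ 0 for all (a,b), let (S_{a,b}) be a Born-compatible frame for Â and B̂ forming a basis of 𝓛(H) with dual frame (T_{a,b}), and let ρ̂ be a density matrix with ⟨φ_b^B̂, ρ̂ φ_b^B̂⟩ ≠ 0 for all b. Then for every X̂ ∈ 𝓛(H), the Q-conditional expectation satisfies the iterated-expectation property: Tr(ρ̂ · 𝔼^Q_ρ̂(X̂|B̂)) = Tr(ρ̂ X̂). -/

import Mathlib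

open scoped ComplexOrder
noncomputable section

variable {H : Type*} [NormedAddCommGroup H] [InnerProductSpace ℂ H] [FiniteDimensional ℂ H]

/-- The rank-one orthogonal projector onto the line spanned by a unit vector `v`. -/
def proj (v : H) : H →ₗ[ℂ] H where
  toFun w := (inner ℂ v w : ℂ) • v
  map_add' x y := by simp [inner_add_right, add_smul]
  map_smul' c x := by simp [inner_smul_right, smul_smul]

/-- The operator `f(Ŷ) = Σ_y f(y) Π_y` associated to a function `f` on the spectrum,
for an operator with orthonormal eigenbasis `φ`. -/
def opF {ι : Type*} [Fintype ι] (φ : ι → H) (f : ι → ℂ) : H →ₗ[ℂ] H :=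
  ∑ i, f i • proj (φ i)


/-- The `Q`-conditional expectation
`𝔼^Q_ρ̂(X̂|B̂) = Σ_{(a,b)} conj(Q̃_{a,b}(X̂†)) (Q_{a,b}(ρ̂)/⟨φ_b^B̂, ρ̂ φ_b^B̂⟩) Π_b^B̂`,
where `Q_{a,b}(ρ̂) = Tr(ρ̂ S†_{a,b})` and `Q̃_{a,b}(X̂) = Tr(X̂ T†_{a,b})`. -/
def QcondExp {ιA ιB : Type*} [Fintype ιA] [Fintype ιB] (φB : ιB → H)
    (S T : ιA × ιB → (H →ₗ[ℂ] H)) (ρ X : H →ₗ[ℂ] H) : H →ₗ[ℂ] H :=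
  ∑ p : ιA × ιB,
    ((starRingEnd ℂ)
        (LinearMap.trace ℂ H (LinearMap.adjoint X ∘ₗ LinearMap.adjoint (T p))) *
      (LinearMap.trace ℂ H (ρ ∘ₗ LinearMap.adjoint (S p)) /
        (inner ℂ (φB p.2) (ρ (φB p.2)) : ℂ))) • proj (φB p.2)

/-!
A family `S` with dual family `T` expands every `Y` in its span as `Y = Σ_p Tr(Y T_p†) S_p`.
Applied to `Y = X†` and followed by taking adjoints, this gives
`X = Σ_p conj(Tr(X† T_p†)) S_p†`, hence `Tr(ρ X) = Σ_p conj(Tr(X† T_p†)) Tr(ρ S_p†)`.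
The trace of `ρ` against the conditional expectation is the same sum, because
`Tr(ρ Π_b) = ⟨φ_b, ρ φ_b⟩` cancels the denominators.
-/

theorem sum_apply_smul_eq_of_mem_span {ι R M : Type*} [Fintype ι] [DecidableEq ι] [Semiring R]
    [AddCommMonoid M] [Module R M] {f : ι → M →ₗ[R] R} {v : ι → M}
    (hfv : ∀ i j, f i (v j) = if i = j then 1 else 0) {x : M}
    (hx : x ∈ Submodule.span R (Set.range v)) : ∑ i, f i x • v i = x := by
  obtain ⟨c, rfl⟩ := (Submodule.mem_span_range_iff_exists_fun R).1 hx
  have hcoeff (i : ι) : f i (∑ j, c j • v j) = c i := by simp [hfv]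
  simp only [hcoeff]

theorem trace_comp_sum_smul {ι R M N : Type*} [Fintype ι] [CommSemiring R]
    [AddCommMonoid M] [Module R M] [AddCommMonoid N] [Module R N]
    (f : N →ₗ[R] M) (c : ι → R) (g : ι → M →ₗ[R] N) :
    LinearMap.trace R M (f ∘ₗ ∑ i, c i • g i) = ∑ i, c i * LinearMap.trace R M (f ∘ₗ g i) := by
  simpa only [map_smul, smul_eq_mul, LinearMap.comp_apply, LinearMap.compRight_apply] using
    map_sum (LinearMap.trace R M ∘ₗ LinearMap.compRight R f) (fun i => c i • g i) Finset.univ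

section HilbertSchmidt

variable {𝕜 E : Type*} [RCLike 𝕜] [NormedAddCommGroup E] [InnerProductSpace 𝕜 E]
  [FiniteDimensional 𝕜 E]

theorem trace_adjoint (F : E →ₗ[𝕜] E) :
    LinearMap.trace 𝕜 E (LinearMap.adjoint F) = starRingEnd 𝕜 (LinearMap.trace 𝕜 E F) := by
  simp only [LinearMap.trace_eq_sum_inner _ (stdOrthonormalBasis 𝕜 E), map_sum,
    LinearMap.adjoint_inner_right, inner_conj_symm]

/-- The Hilbert–Schmidt inner product `⟨F, G⟩ = Tr(G F†)` of operators, as a linear functional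
of `G`. The symbols of the paper are `Q_p(ρ) = hilbertSchmidt (S p) ρ` and
`Q̃_p(X) = hilbertSchmidt (T p) X`. -/
def hilbertSchmidt (F : E →ₗ[𝕜] E) : (E →ₗ[𝕜] E) →ₗ[𝕜] 𝕜 :=
  LinearMap.trace 𝕜 E ∘ₗ LinearMap.mulRight 𝕜 (LinearMap.adjoint F)

theorem hilbertSchmidt_apply (F G : E →ₗ[𝕜] E) :
    hilbertSchmidt F G = LinearMap.trace 𝕜 E (G ∘ₗ LinearMap.adjoint F) :=
  rfl

theorem hilbertSchmidt_conj_symm (F G : E →ₗ[𝕜] E) :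
    starRingEnd 𝕜 (hilbertSchmidt F G) = hilbertSchmidt G F := by
  rw [hilbertSchmidt_apply, hilbertSchmidt_apply, ← trace_adjoint, LinearMap.adjoint_comp,
    LinearMap.adjoint_adjoint]

theorem sum_conj_hilbertSchmidt_smul_adjoint {ι : Type*} [Fintype ι] [DecidableEq ι]
    {S T : ι → E →ₗ[𝕜] E} (hdual : ∀ i j, hilbertSchmidt (S j) (T i) = if i = j then 1 else 0)
    {X : E →ₗ[𝕜] E} (hX : LinearMap.adjoint X ∈ Submodule.span 𝕜 (Set.range S)) :
    ∑ i, starRingEnd 𝕜 (hilbertSchmidt (T i) (LinearMap.adjoint X)) • LinearMap.adjoint (S i) =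
      X := by
  have hdual' (i j : ι) : hilbertSchmidt (T i) (S j) = if i = j then 1 else 0 := by
    rw [← hilbertSchmidt_conj_symm, hdual, apply_ite (starRingEnd 𝕜), map_one, map_zero]
  have hexpand := congrArg LinearMap.adjoint (sum_apply_smul_eq_of_mem_span hdual' hX)
  simpa only [map_sum, map_smulₛₗ, LinearMap.adjoint_adjoint] using hexpand

end HilbertSchmidt

theorem trace_comp_proj (F : H →ₗ[ℂ] H) (v : H) :
    LinearMap.trace ℂ H (F ∘ₗ proj v) = inner ℂ v (F v) := by
  have hrank : F ∘ₗ proj v = (innerₛₗ ℂ v).smulRight (F v) := by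
    ext w
    simp [proj]
  rw [hrank, LinearMap.trace_smulRight, innerₛₗ_apply_apply]

theorem trace_comp_QcondExp {ιA ιB : Type*} [Fintype ιA] [Fintype ιB] (φ : ιB → H)
    (S T : ιA × ιB → H →ₗ[ℂ] H) (ρ X : H →ₗ[ℂ] H) (hρ : ∀ b, inner ℂ (φ b) (ρ (φ b)) ≠ 0) :
    LinearMap.trace ℂ H (ρ ∘ₗ QcondExp φ S T ρ X) =
      ∑ p, starRingEnd ℂ (hilbertSchmidt (T p) (LinearMap.adjoint X)) *
        hilbertSchmidt (S p) ρ := by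
  simp only [QcondExp, trace_comp_sum_smul, trace_comp_proj, mul_assoc, div_mul_cancel₀ _ (hρ _),
    hilbertSchmidt_apply]

theorem stmt12_general {ιA ιB : Type*} [Fintype ιA] [Fintype ιB] [DecidableEq ιA]
    [DecidableEq ιB] (φ : ιB → H) {S T : ιA × ιB → H →ₗ[ℂ] H}
    (hdual : ∀ p q, LinearMap.trace ℂ H (T p ∘ₗ LinearMap.adjoint (S q)) = if p = q then 1 else 0)
    (ρ : H →ₗ[ℂ] H) (hρ : ∀ b, inner ℂ (φ b) (ρ (φ b)) ≠ 0)
    {X : H →ₗ[ℂ] H} (hX : LinearMap.adjoint X ∈ Submodule.span ℂ (Set.range S)) :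
    LinearMap.trace ℂ H (ρ ∘ₗ QcondExp φ S T ρ X) = LinearMap.trace ℂ H (ρ ∘ₗ X) := by
  let c (p : ιA × ιB) : ℂ := starRingEnd ℂ (hilbertSchmidt (T p) (LinearMap.adjoint X))
  calc LinearMap.trace ℂ H (ρ ∘ₗ QcondExp φ S T ρ X)
    _ = ∑ p, c p * LinearMap.trace ℂ H (ρ ∘ₗ LinearMap.adjoint (S p)) :=
      trace_comp_QcondExp φ S T ρ X hρ
    _ = LinearMap.trace ℂ H (ρ ∘ₗ ∑ p, c p • LinearMap.adjoint (S p)) :=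
      (trace_comp_sum_smul ρ c _).symm
    _ = LinearMap.trace ℂ H (ρ ∘ₗ X) := by
      rw [sum_conj_hilbertSchmidt_smul_adjoint hdual hX]

/-- iterated-expectation property of the `Q`-conditional expectation,
for any Born-compatible frame `(S_{a,b})` with dual frame `(T_{a,b})`:
`Tr(ρ̂ 𝔼^Q_ρ̂(X̂|B̂)) = Tr(ρ̂ X̂)`. -/
theorem stmt12 {ιA ιB : Type*} [Fintype ιA] [Fintype ιB] [DecidableEq ιA] [DecidableEq ιB]
    (φA : OrthonormalBasis ιA ℂ H) (φB : OrthonormalBasis ιB ℂ H)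
    (A B : H →ₗ[ℂ] H) (α : ιA → ℝ) (β : ιB → ℝ)
    (hα : Function.Injective α) (hβ : Function.Injective β)
    (hA : ∀ a, A (φA a) = (α a : ℂ) • φA a) (hB : ∀ b, B (φB b) = (β b : ℂ) • φB b)
    (hAB : ∀ (a : ιA) (b : ιB), (inner ℂ (φA a) (φB b) : ℂ) ≠ 0)
    (S T : ιA × ιB → (H →ₗ[ℂ] H))
    (hBornB : ∀ b₀ : ιB, ∑ a : ιA, LinearMap.adjoint (S (a, b₀)) = proj (φB b₀))
    (hBornA : ∀ a₀ : ιA, ∑ b : ιB, LinearMap.adjoint (S (a₀, b)) = proj (φA a₀))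
    (hindep : LinearIndependent ℂ S)
    (hspan : Submodule.span ℂ (Set.range S) = ⊤)
    (hdual : ∀ p q : ιA × ιB,
      LinearMap.trace ℂ H (T p ∘ₗ LinearMap.adjoint (S q)) = if p = q then 1 else 0)
    (ρ : H →ₗ[ℂ] H) (hpos : ∀ v : H, 0 ≤ (inner ℂ v (ρ v) : ℂ))
    (htr : LinearMap.trace ℂ H ρ = 1)
    (hρB : ∀ b : ιB, (inner ℂ (φB b) (ρ (φB b)) : ℂ) ≠ 0)
    (X : H →ₗ[ℂ] H) :
    LinearMap.trace ℂ H (ρ ∘ₗ QcondExp (fun b => φB b) S T ρ X) =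
      LinearMap.trace ℂ H (ρ ∘ₗ X) :=
  stmt12_general (fun b => φB b) hdual ρ hρB (hspan ▸ Submodule.mem_top)
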